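/- Let n, k be positive integers, λ_1, …, λ_k distinct points on 𝕋, c_1, …, c_k > 0, and μ = Σ_{j=1}^k c_j δ_{λ_j}. Then a holomorphic function f on 𝔻 satisfies D_{μ,n}(f) < ∞ if and only if f = p + g·∏_{j=1}^k (z-λ_j) for some polynomial p of degree at most k-1 and some g holomorphic on 𝔻 with D_{σ,n-1}(g) < ∞. -/

import Mathlib

/-!
Write `n = m + 1`. The Poisson integral of a finite sum of point masses is a finite sum of Poisson
kernels `(1 - |z|²) / |z - λ_j|²`, so `D_{μ,n}(f)` is finite exactly when, for every `j`, the
function `G_j = f⁽ⁿ⁾ / (z - λ_j)` lies in the Bergman space with weight `(1 - |z|²)ⁿ`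
(`Dmu_lt_top_iff`). Polar coordinates, Parseval's identity and a beta integral express the norm of
that space by Taylor coefficients (`lintegral_bergman`): the condition becomes
`∑ |b_k|² / (k + 1) ^ (m + 2) < ∞` for the coefficients `b_k` of `G_j`.

The generalized local Douglas formula (`coeff_local_douglas`) says that this holds exactly when
`f = α + (z - λ_j) g` with `∑ (k + 1) ^ m |d_k|² < ∞` for the coefficients `d_k` of `g`, that is,
with `D_{σ,m}(g) < ∞`. It is proved on coefficients, where multiplication by `z - λ` is a first order
difference. Comparing the coefficients of `f⁽ⁿ⁾` computed from `g` and from `G_j` and summing by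
parts against the weights `(k + n)! / k!` leaves a remainder that is a weighted sum of the given
sequence:
* to bound `b` by `d` the remainder is a partial sum, controlled by Hardy's inequality
  (`coeff_quot_of_coeff`);
* to bound `d` by `b` it is a tail sum, controlled by Copson's inequality, which also supplies the
  convergence of the series defining `d` (`exists_coeff_of_coeff_quot`).

Passing from one point to `k` points is algebra (`forall_local_iff`). If `f = α_j + (z - λ_j) g_j`
for all `j`, subtract the Lagrange interpolant `p` of the values `α_j` and expand `1 / ∏ (z - λ_j)`
in partial fractions to write `(f - p) / ∏ (z - λ_j)` as a combination of the `g_j` and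
polynomials. Conversely, `p + g ∏ (z - λ_i)` has such a representation at each `λ_j` because
polynomials multiply the space of `g` with `D_{σ,m}(g) < ∞` into itself.
-/

open MeasureTheory Metric Complex
open scoped ENNReal NNReal

/-- The normalized Lebesgue area measure on ℂ (so the unit disc has mass 1). -/
noncomputable def nA : Measure ℂ := (ENNReal.ofReal Real.pi)⁻¹ • volume

/-- The Poisson integral of the measure `μ`. -/
noncomputable def Pmu (μ : Measure ℂ) (z : ℂ) : ℝ≥0∞ :=
  ∫⁻ ζ, ENNReal.ofReal ((1 - ‖z‖^2) / ‖z - ζ‖^2) ∂μ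

/-- The weighted Dirichlet-type integral of order `n`. -/
noncomputable def Dmu (n : ℕ) (μ : Measure ℂ) (f : ℂ → ℂ) : ℝ≥0∞ :=
  ENNReal.ofReal (1 / ((n.factorial : ℝ) * ((n-1).factorial : ℝ))) *
    ∫⁻ z in ball (0:ℂ) 1, (‖iteratedDeriv n f z‖₊ : ℝ≥0∞) ^ 2 * Pmu μ z *
      ENNReal.ofReal ((1 - ‖z‖^2)^(n-1)) ∂nA

/-- Taylor coefficient of `f` at the origin. -/
noncomputable def coeff (f : ℂ → ℂ) (k : ℕ) : ℂ := iteratedDeriv k f 0 / (k.factorial : ℂ)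

/-- `D_{σ,m}(f) = Σ_{k} C(k,m) |a_k|²` via Taylor coefficients. -/
noncomputable def Dsig (m : ℕ) (f : ℂ → ℂ) : ℝ≥0∞ :=
  ∑' k : ℕ, (k.choose m : ℝ≥0∞) * (‖coeff f k‖₊ : ℝ≥0∞) ^ 2

/-! ### Weighted Hardy and Copson inequalities -/

lemma hardy (x : ℕ → ℝ) (h : Summable fun k => x k ^ 2) :
    Summable fun k : ℕ => ((∑ j ∈ Finset.range (k + 1), x j) / (k + 1)) ^ 2 := by
  -- The telescoping term `S_N ^ 2 / N` makes the inequality provable by induction on `N`.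
  have key : ∀ N : ℕ, (∑ k ∈ Finset.range N,
      ((∑ j ∈ Finset.range (k + 1), x j) / ((k : ℝ) + 1)) ^ 2) / 2
      + (∑ j ∈ Finset.range N, x j) ^ 2 / N ≤ 2 * ∑ k ∈ Finset.range N, x k ^ 2 := by
    intro N
    induction N with
    | zero => simp
    | succ N ih =>
      rw [Finset.sum_range_succ (fun k : ℕ =>
        ((∑ j ∈ Finset.range (k + 1), x j) / ((k : ℝ) + 1)) ^ 2),
        Finset.sum_range_succ (fun k => x k ^ 2), Finset.sum_range_succ x]
      set S := ∑ j ∈ Finset.range N, x j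
      have : ((S + x N) / ((N : ℝ) + 1)) ^ 2 / 2 + (S + x N) ^ 2 / ((N + 1 : ℕ) : ℝ)
          ≤ S ^ 2 / N + 2 * x N ^ 2 := by
        rcases Nat.eq_zero_or_pos N with h0 | h0
        · subst h0
          simp [S]
          nlinarith [sq_nonneg (x 0)]
        · have hN : (0 : ℝ) < N := by exact_mod_cast h0
          set A := (S + x N) / ((N : ℝ) + 1) with hA
          have hS : S = A * (N + 1) - x N := by rw [hA]; field_simp; ring
          have e1 : (S + x N) ^ 2 / ((N + 1 : ℕ) : ℝ) = (N + 1) * A ^ 2 := by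
            rw [hA]; push_cast; field_simp
          have e2 : 2 * S * A - N * A ^ 2 ≤ S ^ 2 / N := by
            rw [le_div_iff₀ hN]
            nlinarith [sq_nonneg (S - N * A)]
          rw [e1]
          refine le_trans ?_ (add_le_add_left e2 _)
          rw [hS]
          nlinarith [sq_nonneg (A - 2 * x N)]
      linarith
  refine summable_of_sum_range_le (c := 4 * ∑' k, x k ^ 2) (fun _ => sq_nonneg _) fun N => ?_
  have h1 := key N
  have h2 := h.sum_le_tsum (Finset.range N) (fun _ _ => sq_nonneg _)
  have h3 : 0 ≤ (∑ j ∈ Finset.range N, x j) ^ 2 / (N : ℝ) := by positivity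
  linarith

/-- The growing weight is absorbed into `x`, because `j ≤ k` for every term of the inner sum. -/
lemma hardy_weighted (m : ℕ) (x : ℕ → ℝ) (hx : ∀ k, 0 ≤ x k)
    (h : Summable fun k : ℕ => x k ^ 2 / ((k : ℝ) + 1) ^ m) :
    Summable fun k : ℕ => (∑ j ∈ Finset.range (k + 1), x j) ^ 2 / ((k : ℝ) + 1) ^ (m + 2) := by
  have h' := hardy (fun k => x k / √(((k : ℝ) + 1) ^ m)) (by
    refine h.congr fun k => ?_
    rw [div_pow, Real.sq_sqrt (by positivity)])
  refine Summable.of_nonneg_of_le (fun k => by positivity) (fun k => ?_) h'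
  have e : (∑ j ∈ Finset.range (k + 1), x j) ^ 2 / ((k : ℝ) + 1) ^ (m + 2) =
      ((∑ j ∈ Finset.range (k + 1), x j / √(((k : ℝ) + 1) ^ m)) / (k + 1)) ^ 2 := by
    rw [← Finset.sum_div, div_pow, div_pow, Real.sq_sqrt (by positivity), pow_add, div_div]
  rw [e]
  have hk : ∀ i : ℕ, 0 ≤ x i / √(((k : ℝ) + 1) ^ m) := fun i => div_nonneg (hx i) (by positivity)
  refine pow_le_pow_left₀ (div_nonneg (Finset.sum_nonneg fun i _ => hk i) (by positivity)) ?_ 2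
  gcongr with j hj
  · exact hx j
  · have := Finset.mem_range.1 hj
    exact_mod_cast Nat.lt_succ_iff.1 this

/-- Copson's inequality, the dual of Hardy's, for tail sums; the summability of `y` itself is
part of the conclusion. -/
lemma copson (y : ℕ → ℝ) (hy : ∀ k, 0 ≤ y k)
    (h : Summable fun k : ℕ => ((k : ℝ) + 1) ^ 2 * y k ^ 2) :
    Summable y ∧ Summable fun k : ℕ => (∑' j, y (j + k)) ^ 2 := by
  set Y := ∑' k : ℕ, ((k : ℝ) + 1) ^ 2 * y k ^ 2
  -- `R N k` is the tail sum truncated at `N`, so that no boundary term appears below.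
  set R : ℕ → ℕ → ℝ := fun N k => ∑ j ∈ Finset.Ico k N, y j with hR
  have hR0 : ∀ N k, 0 ≤ R N k := fun N k => Finset.sum_nonneg fun i _ => hy i
  have hRs : ∀ N k, k < N → R N k = y k + R N (k + 1) := fun N k hk => by
    simp only [hR]; rw [Finset.sum_eq_sum_Ico_succ_bot hk]
  have key : ∀ N M, M ≤ N → (∑ k ∈ Finset.range M, R N k ^ 2) / 2 ≤
      M * R N M ^ 2 + 2 * ∑ k ∈ Finset.range M, ((k : ℝ) + 1) ^ 2 * y k ^ 2 := by
    intro N M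
    induction M with
    | zero => simp
    | succ M ih =>
      intro hM
      have h1 := ih (by omega)
      rw [Finset.sum_range_succ, Finset.sum_range_succ]
      have h2 := hRs N M (by omega)
      have : R N M ^ 2 / 2 + M * R N M ^ 2 ≤ ((M + 1 : ℕ) : ℝ) * R N (M + 1) ^ 2
          + 2 * (((M : ℝ) + 1) ^ 2 * y M ^ 2) := by
        push_cast
        have h3 : R N (M + 1) = R N M - y M := by linarith
        rw [h3]
        nlinarith [sq_nonneg (R N M - 2 * ((M : ℝ) + 1) * y M),
          mul_nonneg (Nat.cast_nonneg (α := ℝ) M) (sq_nonneg (y M)), sq_nonneg (y M)]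
      linarith
  have key2 : ∀ N M, M ≤ N → (∑ k ∈ Finset.range M, R N k ^ 2) ≤ 4 * Y := by
    intro N M hM
    have h1 := key N N le_rfl
    have h2 : R N N = 0 := by simp [hR]
    have h3 := h.sum_le_tsum (Finset.range N) (fun _ _ => by positivity)
    have h4 : (∑ k ∈ Finset.range M, R N k ^ 2) ≤ ∑ k ∈ Finset.range N, R N k ^ 2 :=
      Finset.sum_le_sum_of_subset_of_nonneg (Finset.range_mono hM) fun _ _ _ => sq_nonneg _
    rw [h2] at h1
    simp only [Y] at *
    linarith
  have hsum : Summable y := by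
    refine summable_of_sum_range_le (c := √(4 * Y)) hy fun N => ?_
    rcases Nat.eq_zero_or_pos N with h0 | h0
    · subst h0; simp
    · have h1 := key2 N 1 h0
      simp only [Finset.sum_range_one, hR] at h1
      rw [← Finset.range_eq_Ico] at h1
      exact Real.le_sqrt_of_sq_le h1
  refine ⟨hsum, summable_of_sum_range_le (c := 4 * Y) (fun _ => sq_nonneg _) fun M => ?_⟩
  have ht : ∀ k, Filter.Tendsto (fun N => R N k) Filter.atTop (nhds (∑' j, y (j + k))) := by
    intro k
    have h1 := ((summable_nat_add_iff k).2 hsum).hasSum.tendsto_sum_nat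
    rw [← Filter.tendsto_add_atTop_iff_nat k]
    refine h1.congr fun N => ?_
    simp only [hR]
    rw [Finset.sum_Ico_eq_sum_range]
    simp [add_comm]
  have ht2 : Filter.Tendsto (fun N => ∑ k ∈ Finset.range M, R N k ^ 2) Filter.atTop
      (nhds (∑ k ∈ Finset.range M, (∑' j, y (j + k)) ^ 2)) :=
    tendsto_finsetSum _ fun k _ => (ht k).pow 2
  exact le_of_tendsto ht2 (Filter.eventually_atTop.2 ⟨M, fun N hN => key2 N M hN⟩)

lemma copson_weighted (m : ℕ) (y : ℕ → ℝ) (hy : ∀ k, 0 ≤ y k)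
    (h : Summable fun k : ℕ => ((k : ℝ) + 1) ^ (m + 2) * y k ^ 2) :
    Summable y ∧ Summable fun k : ℕ => ((k : ℝ) + 1) ^ m * (∑' j, y (j + k)) ^ 2 := by
  have hs : ∀ k : ℕ, 0 ≤ √(((k : ℝ) + 1) ^ m) := fun k => Real.sqrt_nonneg _
  have h1 : ∀ k : ℕ, 1 ≤ √(((k : ℝ) + 1) ^ m) := fun k => by
    rw [Real.one_le_sqrt]; exact one_le_pow₀ (by linarith [Nat.cast_nonneg (α := ℝ) k])
  obtain ⟨ha, hb⟩ := copson (fun k => √(((k : ℝ) + 1) ^ m) * y k)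
    (fun k => mul_nonneg (hs k) (hy k)) (by
      refine h.congr fun k => ?_
      rw [mul_pow, Real.sq_sqrt (by positivity)]; ring)
  have hsum : Summable y := Summable.of_nonneg_of_le hy
    (fun k => le_mul_of_one_le_left (hy k) (h1 k)) ha
  refine ⟨hsum, Summable.of_nonneg_of_le (fun k => by positivity) (fun k => ?_) hb⟩
  have e : ((k : ℝ) + 1) ^ m * (∑' j, y (j + k)) ^ 2 =
      (∑' j, √(((k : ℝ) + 1) ^ m) * y (j + k)) ^ 2 := by
    rw [tsum_mul_left, mul_pow, Real.sq_sqrt (by positivity)]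
  rw [e]
  refine pow_le_pow_left₀ (tsum_nonneg fun j => mul_nonneg (hs k) (hy _)) ?_ 2
  refine Summable.tsum_le_tsum (fun j => ?_)
    (((summable_nat_add_iff k).2 hsum).mul_left _) ((summable_nat_add_iff k).2 ha)
  refine mul_le_mul_of_nonneg_right (Real.sqrt_le_sqrt ?_) (hy _)
  gcongr
  linarith

/-! ### Division by `z - λ` at the level of coefficients -/

/-- The factor `(i + n)! / i!` by which the `i`-th Taylor coefficient of the `n`-th derivative
differs from the `(i + n)`-th coefficient of the function. -/
noncomputable def derivWeight (n i : ℕ) : ℝ := ((i + n).factorial : ℝ) / i.factorial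

lemma derivWeight_eq (n i : ℕ) : derivWeight n i = ((i + 1).ascFactorial n : ℕ) := by
  rw [derivWeight, div_eq_iff (by positivity), mul_comm]
  exact_mod_cast (Nat.factorial_mul_ascFactorial i n).symm

lemma derivWeight_pos (n i : ℕ) : 0 < derivWeight n i := by unfold derivWeight; positivity

lemma derivWeight_ge (n i : ℕ) : ((i : ℝ) + 1) ^ n ≤ derivWeight n i := by
  rw [derivWeight_eq]; exact_mod_cast Nat.pow_succ_le_ascFactorial (i + 1) n

lemma derivWeight_le (n i : ℕ) : derivWeight n i ≤ ((n : ℝ) + 1) ^ n * ((i : ℝ) + 1) ^ n := by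
  rw [derivWeight_eq, ← mul_pow]
  have h1 : (i + 1).ascFactorial n ≤ (i + n) ^ n := by
    have := Nat.ascFactorial_le_pow_add i n
    simpa using this
  have h2 : (i + n) ^ n ≤ ((n + 1) * (i + 1)) ^ n := Nat.pow_le_pow_left (by nlinarith) n
  exact_mod_cast h1.trans h2

lemma derivWeight_succ (n i : ℕ) :
    derivWeight n (i + 1) * (i + 1) = derivWeight n i * (i + 1 + n) := by
  unfold derivWeight
  have e : i + 1 + n = (i + n) + 1 := by ring
  rw [e, Nat.factorial_succ, Nat.factorial_succ]
  push_cast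
  field_simp
  ring

/-- Shifting the index does not affect summability against polynomially growing weights. -/
lemma summable_shift (m s : ℕ) (x : ℕ → ℝ) (hx : ∀ k, 0 ≤ x k) :
    (Summable fun k : ℕ => ((k : ℝ) + 1) ^ m * x k) ↔
      Summable fun k : ℕ => ((k : ℝ) + 1) ^ m * x (k + s) := by
  rw [← summable_nat_add_iff s]
  constructor <;> intro h
  · refine Summable.of_nonneg_of_le (fun k => mul_nonneg (by positivity) (hx _)) (fun k => ?_) h
    refine mul_le_mul_of_nonneg_right ?_ (hx _)
    gcongr; simp
  · refine Summable.of_nonneg_of_le (fun k => mul_nonneg (by positivity) (hx _)) (fun k => ?_)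
      (h.mul_left (((s : ℝ) + 1) ^ m))
    rw [← mul_assoc, ← mul_pow]
    refine mul_le_mul_of_nonneg_right ?_ (hx _)
    gcongr
    push_cast
    nlinarith [mul_nonneg (Nat.cast_nonneg (α := ℝ) k) (Nat.cast_nonneg (α := ℝ) s)]

/-- If `f = α + (z - λ) g`, where `g` has coefficients `d`, and `f⁽ᵐ⁺¹⁾ = (z - λ) G`, where `G`
has coefficients `b`, then the weighted square-summability of `d` gives that of `b`. -/
lemma coeff_quot_of_coeff (m : ℕ) (l : ℂ) (hl : ‖l‖ = 1) (d b : ℕ → ℂ)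
    (hd : Summable fun k : ℕ => ((k : ℝ) + 1) ^ m * ‖d k‖ ^ 2)
    (h0 : (derivWeight (m + 1) 0 : ℂ) * (d m - l * d (m + 1)) = - l * b 0)
    (hs : ∀ k, (derivWeight (m + 1) (k + 1) : ℂ) * (d (k + 1 + m) - l * d (k + 1 + (m + 1)))
      = b k - l * b (k + 1)) :
    Summable fun k : ℕ => ‖b k‖ ^ 2 / ((k : ℝ) + 1) ^ (m + 2) := by
  set W := derivWeight (m + 1) with hW
  set s : ℕ → ℂ := fun k => b k - W k * d (k + (m + 1)) with hsdef
  set C : ℝ := ((m : ℝ) + 2) ^ (m + 2) with hC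
  have hWle : ∀ k, W k ≤ C * ((k : ℝ) + 1) ^ (m + 1) := fun k => by
    refine (derivWeight_le (m + 1) k).trans ?_
    push_cast
    rw [hC, add_assoc]
    norm_num
    gcongr
    · linarith [Nat.cast_nonneg (α := ℝ) m]
    · simp
  -- The difference is `(m + 1) (k + 1 + m)! / (k + 1)!`, of order `m` in `k`.
  have hdiff : ∀ k, 0 ≤ W (k + 1) - W k ∧ W (k + 1) - W k ≤ C * ((k : ℝ) + 2) ^ m := fun k => by
    have h1 := derivWeight_succ (m + 1) k
    have h2 := derivWeight_pos (m + 1) k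
    have h3 := derivWeight_le (m + 1) k
    rw [← hW] at h1 h2 h3
    have hk : (0 : ℝ) < (k : ℝ) + 1 := by positivity
    have h4 : W (k + 1) - W k = W k * (m + 1) / (k + 1) := by
      rw [eq_div_iff hk.ne']
      push_cast at h1
      linarith
    rw [h4]
    refine ⟨by positivity, ?_⟩
    rw [div_le_iff₀ hk]
    calc W k * (m + 1) ≤ ((((m + 1 : ℕ) : ℝ) + 1) ^ (m + 1) * ((k : ℝ) + 1) ^ (m + 1)) * (m + 2) := by
          gcongr; norm_num
      _ = C * (((k : ℝ) + 1) ^ m * (k + 1)) := by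
          rw [hC]; push_cast; ring
      _ ≤ C * ((k : ℝ) + 2) ^ m * (k + 1) := by
          rw [mul_assoc]
          gcongr
          norm_num
  set x : ℕ → ℝ := fun j => C * ((j : ℝ) + 1) ^ m * ‖d (j + m)‖ with hx
  have hx0 : ∀ j, 0 ≤ x j := fun j => by positivity
  have hs0 : ‖s 0‖ ≤ x 0 := by
    have e : l * s 0 = - (W 0 * d m) := by
      simp only [hsdef, zero_add]; linear_combination h0
    have e2 : ‖s 0‖ = ‖l * s 0‖ := by rw [norm_mul, hl, one_mul]
    rw [e2, e, norm_neg, norm_mul, Complex.norm_real, Real.norm_of_nonneg (derivWeight_pos _ _).le]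
    simp only [hx, zero_add]
    have := hWle 0
    norm_num at this ⊢
    gcongr
  have hsk : ∀ k, ‖s (k + 1)‖ ≤ ‖s k‖ + x (k + 1) := fun k => by
    have e : l * s (k + 1) = s k - ((W (k + 1) - W k : ℝ) : ℂ) * d (k + 1 + m) := by
      have := hs k
      simp only [hsdef, show k + (m + 1) = k + 1 + m by ring]
      push_cast
      linear_combination this
    have e2 : ‖s (k + 1)‖ = ‖l * s (k + 1)‖ := by rw [norm_mul, hl, one_mul]
    rw [e2, e]
    refine (norm_sub_le _ _).trans ?_
    rw [norm_mul, Complex.norm_real, Real.norm_of_nonneg (hdiff k).1]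
    simp only [hx]
    have h5 := (hdiff k).2
    push_cast
    rw [add_assoc (k : ℝ) 1 1]
    norm_num
    gcongr
  have hS : ∀ k, ‖s k‖ ≤ ∑ j ∈ Finset.range (k + 1), x j := fun k => by
    induction k with
    | zero => simpa using hs0
    | succ k ih => rw [Finset.sum_range_succ]; exact (hsk k).trans (by gcongr)
  have hxs : Summable fun k : ℕ => x k ^ 2 / ((k : ℝ) + 1) ^ m := by
    refine (((summable_shift m m (fun k => ‖d k‖ ^ 2) (fun k => sq_nonneg _)).1 hd).mul_left
      (C ^ 2)).congr fun k => ?_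
    simp only [hx]
    field_simp
  have hH := hardy_weighted m x hx0 hxs
  have hD : Summable fun k : ℕ => ‖(W k : ℂ) * d (k + (m + 1))‖ ^ 2 / ((k : ℝ) + 1) ^ (m + 2) := by
    refine Summable.of_nonneg_of_le (fun k => by positivity) (fun k => ?_)
      (((summable_shift m (m + 1) (fun k => ‖d k‖ ^ 2) (fun k => sq_nonneg _)).1 hd).mul_left
      (C ^ 2))
    rw [norm_mul, Complex.norm_real, Real.norm_of_nonneg (derivWeight_pos _ _).le, mul_pow,
      div_le_iff₀ (by positivity)]
    calc W k ^ 2 * ‖d (k + (m + 1))‖ ^ 2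
        ≤ (C * ((k : ℝ) + 1) ^ (m + 1)) ^ 2 * ‖d (k + (m + 1))‖ ^ 2 := by
          gcongr
          · exact (derivWeight_pos _ _).le
          · exact hWle k
      _ = _ := by ring
  refine Summable.of_nonneg_of_le (fun k => by positivity) (fun k => ?_)
    ((hH.mul_left 2).add (hD.mul_left 2))
  have hb : b k = s k + W k * d (k + (m + 1)) := by simp [hsdef]
  rw [← mul_div_assoc, ← mul_div_assoc, ← add_div]
  gcongr
  rw [hb]
  have h1 := norm_add_le (s k) (W k * d (k + (m + 1)))
  have h2 := (pow_le_pow_left₀ (norm_nonneg _) (hS k) 2)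
  have h3 := pow_le_pow_left₀ (norm_nonneg _) h1 2
  nlinarith [sq_nonneg (‖s k‖ - ‖(W k : ℂ) * d (k + (m + 1))‖)]

/-- A partial converse of `coeff_quot_of_coeff`: the recursion `a_k = h_{k-1} - λ h_k` for the
coefficients of `(f - α) / (z - λ)` has, from the index `m + 1` on, a weighted square-summable
solution, `e k = h_{k + m + 1}`. Formally `λ ^ k h_k = ∑_{j > k} λ ^ (j - 1) a_j`; this series need
not converge absolutely, but its summation by parts in terms of `b` does, by Copson's inequality. -/
lemma exists_coeff_of_coeff_quot (m : ℕ) (l : ℂ) (hl : ‖l‖ = 1) (a b : ℕ → ℂ)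
    (hb : Summable fun k : ℕ => ‖b k‖ ^ 2 / ((k : ℝ) + 1) ^ (m + 2))
    (hs : ∀ k, (derivWeight (m + 1) (k + 1) : ℂ) * a (k + 1 + (m + 1)) = b k - l * b (k + 1)) :
    ∃ e : ℕ → ℂ, (∀ k, e k - l * e (k + 1) = a (k + 1 + (m + 1))) ∧
      Summable fun k : ℕ => ((k : ℝ) + 1) ^ m * ‖e k‖ ^ 2 := by
  have hl0 : l ≠ 0 := by rintro rfl; simp at hl
  set W := derivWeight (m + 1) with hW
  have hWp : ∀ k, 0 < W k := derivWeight_pos (m + 1)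
  set v : ℕ → ℂ := fun j => ((1 / W j - 1 / W (j + 1) : ℝ) : ℂ) * b j with hv
  set y : ℕ → ℝ := fun j => ((m : ℝ) + 1) * ‖b j‖ / ((j : ℝ) + 1) ^ (m + 2) with hy
  have hvy : ∀ j, ‖v j‖ ≤ y j := fun j => by
    have h1 := derivWeight_succ (m + 1) j
    have h2 := derivWeight_ge (m + 1) j
    rw [← hW] at h1 h2
    have hj : (0 : ℝ) < (j : ℝ) + 1 := by positivity
    have h3 : 1 / W j - 1 / W (j + 1) = (m + 1) / (W j * (j + 1 + (m + 1))) := by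
      have h5 : W (j + 1) = W j * (j + 1 + (m + 1)) / (j + 1) := by
        rw [eq_div_iff hj.ne']; push_cast at h1; linarith
      have := (hWp j).ne'
      rw [h5]
      field_simp
      ring
    rw [hv, norm_mul, Complex.norm_real, h3, Real.norm_of_nonneg
      (by have := hWp j; positivity)]
    simp only [hy]
    rw [mul_div_right_comm]
    gcongr
    rw [pow_succ]
    have h6 := hWp j
    gcongr
    all_goals linarith [Nat.cast_nonneg (α := ℝ) m]
  have hy0 : ∀ j, 0 ≤ y j := fun j => by positivity
  obtain ⟨hysum, hyT⟩ := copson_weighted m y hy0 (by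
    refine (hb.mul_left (((m : ℝ) + 1) ^ 2)).congr fun k => ?_
    simp only [hy]
    field_simp)
  have hlv : ∀ j, ‖l ^ j * v j‖ ≤ y j := fun j => by
    rw [norm_mul, norm_pow, hl, one_pow, one_mul]; exact hvy j
  have hvs : Summable fun j => l ^ j * v j := Summable.of_norm_bounded hysum hlv
  set T : ℕ → ℂ := fun i => (l ^ i)⁻¹ * ∑' j, l ^ (j + (i + 1)) * v (j + (i + 1)) with hT
  have hTrec : ∀ i, T i - l * T (i + 1) = l * v (i + 1) := fun i => by
    simp only [hT]
    have h1 := ((summable_nat_add_iff (i + 1)).2 hvs).tsum_eq_zero_add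
    have h2 : ∀ j, j + 1 + (i + 1) = j + (i + 1 + 1) := fun j => by ring
    rw [h1]
    simp only [zero_add, h2]
    field_simp
    ring
  have hTle : ∀ i, ‖T i‖ ≤ ∑' j, y (j + i) := fun i => by
    simp only [hT]
    rw [norm_mul, norm_inv, norm_pow, hl, one_pow, inv_one, one_mul]
    have hy1 := (summable_nat_add_iff i).2 hysum
    have hy2 := (summable_nat_add_iff (i + 1)).2 hysum
    refine (tsum_of_norm_bounded hy2.hasSum fun j => hlv _).trans ?_
    rw [hy1.tsum_eq_zero_add]
    have : ∀ j, j + (i + 1) = j + 1 + i := fun j => by ring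
    simp only [this]
    linarith [hy0 (0 + i)]
  refine ⟨fun i => b i / W (i + 1) - T i, fun k => ?_, ?_⟩
  · have h1 := hTrec k
    have h2 := hs k
    have h3 : (W (k + 1) : ℂ) ≠ 0 := by exact_mod_cast (hWp _).ne'
    have h4 : (W (k + 1 + 1) : ℂ) ≠ 0 := by exact_mod_cast (hWp _).ne'
    have h5 : a (k + 1 + (m + 1)) = (b k - l * b (k + 1)) / W (k + 1) := by
      rw [← h2]; field_simp
    rw [h5]
    simp only [hv] at h1
    push_cast at h1
    linear_combination -h1
  · refine Summable.of_nonneg_of_le (fun k => by positivity) (fun k => ?_)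
      ((hb.mul_left 2).add (hyT.mul_left 2))
    have h1 : ‖b k / W (k + 1)‖ ^ 2 * ((k : ℝ) + 1) ^ m ≤ ‖b k‖ ^ 2 / ((k : ℝ) + 1) ^ (m + 2) := by
      have h2 : ((k : ℝ) + 1) ^ (m + 1) ≤ W (k + 1) := by
        refine le_trans ?_ (derivWeight_ge (m + 1) (k + 1))
        gcongr; norm_num
      rw [norm_div, Complex.norm_real, Real.norm_of_nonneg (hWp _).le, div_pow, div_mul_eq_mul_div,
        div_le_div_iff₀ (by have := hWp (k + 1); positivity) (by positivity), mul_assoc]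
      gcongr
      calc ((k : ℝ) + 1) ^ m * ((k : ℝ) + 1) ^ (m + 2) = (((k : ℝ) + 1) ^ (m + 1)) ^ 2 := by ring
        _ ≤ _ := by gcongr
    have h2 : ‖T k‖ ^ 2 ≤ (∑' j, y (j + k)) ^ 2 := pow_le_pow_left₀ (norm_nonneg _) (hTle k) 2
    have h3 : ((k : ℝ) + 1) ^ m * ‖T k‖ ^ 2 ≤ ((k : ℝ) + 1) ^ m * (∑' j, y (j + k)) ^ 2 := by
      gcongr
    have h4 : ‖b k / W (k + 1) - T k‖ ^ 2 ≤ 2 * ‖b k / W (k + 1)‖ ^ 2 + 2 * ‖T k‖ ^ 2 := by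
      have h5 := pow_le_pow_left₀ (norm_nonneg _) (norm_sub_le (b k / W (k + 1)) (T k)) 2
      nlinarith [sq_nonneg (‖b k / W (k + 1)‖ - ‖T k‖)]
    have h5 : ((k : ℝ) + 1) ^ m * ‖b k / W (k + 1) - T k‖ ^ 2 ≤
      ((k : ℝ) + 1) ^ m * (2 * ‖b k / W (k + 1)‖ ^ 2 + 2 * ‖T k‖ ^ 2) := by gcongr
    linarith

/-! ### Holomorphic functions on the disc and their coefficients -/

/-- `F` is the sum of the power series with coefficients `c` on the unit disc. -/
def IsPowerSum (F : ℂ → ℂ) (c : ℕ → ℂ) : Prop :=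
  ∀ z ∈ ball (0 : ℂ) 1, HasSum (fun k => c k * z ^ k) (F z)

lemma hasSum_iff_of_eq {u v : ℕ → ℂ} {a : ℂ} (h : ∀ k, u k = v k) : HasSum u a ↔ HasSum v a := by
  rw [funext h]

lemma isPowerSum_coeff {F : ℂ → ℂ} (hF : DifferentiableOn ℂ F (ball 0 1)) :
    IsPowerSum F (coeff F) := fun z hz => by
  have := Complex.hasSum_taylorSeries_on_ball hF hz
  refine (hasSum_iff_of_eq fun k => ?_).1 this
  simp only [coeff, sub_zero, smul_eq_mul]
  ring

lemma IsPowerSum.coeff_eq {F : ℂ → ℂ} {c : ℕ → ℂ} (h : IsPowerSum F c)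
    (hF : DifferentiableOn ℂ F (ball 0 1)) : coeff F = c := by
  have key : ∀ {c : ℕ → ℂ}, IsPowerSum F c →
      HasFPowerSeriesAt F (FormalMultilinearSeries.ofScalars ℂ c) 0 := fun {c} h => by
    rw [hasFPowerSeriesAt_iff]
    filter_upwards [ball_mem_nhds (0 : ℂ) one_pos] with z hz
    simpa [FormalMultilinearSeries.coeff_ofScalars, mul_comm] using h z hz
  exact FormalMultilinearSeries.ofScalars_series_injective ℂ ℂ
    ((key (isPowerSum_coeff hF)).eq_formalMultilinearSeries (key h))

lemma IsPowerSum.congr {F G : ℂ → ℂ} {c : ℕ → ℂ} (h : IsPowerSum F c)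
    (hFG : ∀ z ∈ ball (0 : ℂ) 1, F z = G z) : IsPowerSum G c := fun z hz =>
  hFG z hz ▸ h z hz

lemma IsPowerSum.sub_mul {F : ℂ → ℂ} {c : ℕ → ℂ} (h : IsPowerSum F c) (l : ℂ) :
    IsPowerSum (fun z => (z - l) * F z)
      (fun k => (if k = 0 then 0 else c (k - 1)) - l * c k) := fun z hz => by
  have h1 := h z hz
  have h2 : HasSum (fun k => (if k = 0 then 0 else c (k - 1)) * z ^ k) (z * F z) := by
    rw [← hasSum_nat_add_iff' 1]
    simpa [pow_succ, mul_assoc, mul_comm, mul_left_comm] using h1.mul_left z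
  have := h2.sub (h1.mul_left l)
  rw [← _root_.sub_mul] at this
  refine (hasSum_iff_of_eq fun k => ?_).1 this
  ring

lemma coeff_iteratedDeriv (n k : ℕ) (f : ℂ → ℂ) :
    coeff (iteratedDeriv n f) k = derivWeight n k * coeff f (k + n) := by
  have h : iteratedDeriv k (iteratedDeriv n f) = iteratedDeriv (k + n) f := by
    simp only [iteratedDeriv_eq_iterate, Function.iterate_add_apply]
  have h1 : ((k + n).factorial : ℂ) ≠ 0 := by exact_mod_cast (k + n).factorial_ne_zero
  have h2 : (k.factorial : ℂ) ≠ 0 := by exact_mod_cast k.factorial_ne_zero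
  simp only [coeff, h, derivWeight]
  push_cast
  field_simp

lemma differentiableOn_iteratedDeriv (n : ℕ) {f : ℂ → ℂ} (hf : DifferentiableOn ℂ f (ball 0 1)) :
    DifferentiableOn ℂ (iteratedDeriv n f) (ball 0 1) := by
  induction n with
  | zero => simpa using hf
  | succ n ih => rw [iteratedDeriv_succ]; exact ih.deriv isOpen_ball

lemma sub_ne_zero_of_ball {l z : ℂ} (hl : ‖l‖ = 1) (hz : z ∈ ball (0 : ℂ) 1) : z - l ≠ 0 := by
  intro h
  rw [sub_eq_zero] at h
  subst h
  simp [hl] at hz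

/-- The space of holomorphic functions on the disc with `∑ (k + 1) ^ m |a_k| ^ 2 < ∞`. -/
def InWeighted (m : ℕ) (g : ℂ → ℂ) : Prop :=
  DifferentiableOn ℂ g (ball 0 1) ∧ Summable fun k : ℕ => ((k : ℝ) + 1) ^ m * ‖coeff g k‖ ^ 2

/-- The weights `k.choose m` and `(k + 1) ^ m` are comparable for `k ≥ m`, and finitely many terms
do not matter. -/
lemma Dsig_lt_top_iff (m : ℕ) (g : ℂ → ℂ) :
    Dsig m g < ⊤ ↔ Summable fun k : ℕ => ((k : ℝ) + 1) ^ m * ‖coeff g k‖ ^ 2 := by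
  have e : Dsig m g = ∑' k : ℕ, ((((k.choose m : ℝ≥0) * ‖coeff g k‖₊ ^ 2 : ℝ≥0)) : ℝ≥0∞) := by
    simp [Dsig]
  rw [e, lt_top_iff_ne_top, ENNReal.tsum_coe_ne_top_iff_summable, ← NNReal.summable_coe]
  push_cast
  rw [summable_shift m m (fun k => ‖coeff g k‖ ^ 2) (fun _ => sq_nonneg _),
    ← summable_nat_add_iff m]
  constructor <;> intro h
  · refine Summable.of_nonneg_of_le (fun k => by positivity) (fun k => ?_)
      (h.mul_left (m.factorial : ℝ))
    rw [← mul_assoc]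
    gcongr
    have h1 := Nat.pow_le_choose (α := ℝ) m (k + m)
    rw [div_le_iff₀ (by positivity), show k + m + 1 - m = k + 1 by omega] at h1
    push_cast at h1
    linarith
  · refine Summable.of_nonneg_of_le (fun k => by positivity) (fun k => ?_)
      (h.mul_left (((m : ℝ) + 1) ^ m))
    rw [← mul_assoc, ← mul_pow]
    gcongr
    have h1 : (k + m).choose m ≤ ((m + 1) * (k + 1)) ^ m :=
      (Nat.choose_le_pow _ _).trans (Nat.pow_le_pow_left (by nlinarith) m)
    exact_mod_cast h1

namespace InWeighted

variable {m : ℕ} {g h : ℂ → ℂ}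

lemma congr (hg : InWeighted m g) (he : ∀ z ∈ ball (0 : ℂ) 1, g z = h z) : InWeighted m h := by
  have hd : DifferentiableOn ℂ h (ball 0 1) := hg.1.congr fun z hz => (he z hz).symm
  refine ⟨hd, ?_⟩
  rw [((isPowerSum_coeff hg.1).congr he).coeff_eq hd]
  exact hg.2

lemma add (hg : InWeighted m g) (hh : InWeighted m h) : InWeighted m fun z => g z + h z := by
  have hd : DifferentiableOn ℂ (fun z => g z + h z) (ball 0 1) := hg.1.add hh.1
  have hp : IsPowerSum (fun z => g z + h z) (fun k => coeff g k + coeff h k) := fun z hz => by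
    simpa [add_mul] using (isPowerSum_coeff hg.1 z hz).add (isPowerSum_coeff hh.1 z hz)
  refine ⟨hd, ?_⟩
  rw [hp.coeff_eq hd]
  refine Summable.of_nonneg_of_le (fun k => by positivity) (fun k => ?_)
    ((hg.2.mul_left 2).add (hh.2.mul_left 2))
  have h1 := pow_le_pow_left₀ (norm_nonneg _) (norm_add_le (coeff g k) (coeff h k)) 2
  have h2 : ‖coeff g k + coeff h k‖ ^ 2 ≤ 2 * ‖coeff g k‖ ^ 2 + 2 * ‖coeff h k‖ ^ 2 := by
    nlinarith [sq_nonneg (‖coeff g k‖ - ‖coeff h k‖)]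
  have h3 := mul_le_mul_of_nonneg_left h2 (show 0 ≤ ((k : ℝ) + 1) ^ m by positivity)
  linarith

lemma const_mul (c : ℂ) (hg : InWeighted m g) : InWeighted m fun z => c * g z := by
  have hd : DifferentiableOn ℂ (fun z => c * g z) (ball 0 1) := hg.1.const_mul c
  have hp : IsPowerSum (fun z => c * g z) (fun k => c * coeff g k) := fun z hz => by
    simpa [mul_assoc] using (isPowerSum_coeff hg.1 z hz).mul_left c
  refine ⟨hd, ?_⟩
  rw [hp.coeff_eq hd]
  refine (hg.2.mul_left (‖c‖ ^ 2)).congr fun k => ?_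
  rw [norm_mul]; ring

lemma id_mul (hg : InWeighted m g) : InWeighted m fun z => z * g z := by
  have hd : DifferentiableOn ℂ (fun z => z * g z) (ball 0 1) := differentiableOn_id.mul hg.1
  have hp := ((isPowerSum_coeff hg.1).sub_mul 0).congr (G := fun z => z * g z)
    (fun z _ => by simp)
  refine ⟨hd, ?_⟩
  rw [hp.coeff_eq hd, summable_shift m 1 (fun k => ‖_‖ ^ 2) (fun _ => sq_nonneg _)]
  simpa using hg.2

/-- Polynomials are multipliers. -/
lemma polynomial_mul (p : Polynomial ℂ) (hg : InWeighted m g) :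
    InWeighted m fun z => p.eval z * g z := by
  induction p using Polynomial.induction_on' with
  | add p q hp hq => exact (hp.add hq).congr fun z _ => by simp [add_mul]
  | monomial n a =>
    have : InWeighted m fun z => z ^ n * g z := by
      induction n with
      | zero => simpa using hg
      | succ n ih => exact ih.id_mul.congr fun z _ => by ring
    exact (this.const_mul a).congr fun z _ => by simp [mul_assoc]

lemma one : InWeighted m fun _ => 1 := by
  have hd : DifferentiableOn ℂ (fun _ : ℂ => (1 : ℂ)) (ball 0 1) := differentiableOn_const _
  have hp : IsPowerSum (fun _ => 1) (fun k => if k = 0 then 1 else 0) := fun z _ => by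
    convert hasSum_ite_eq (0 : ℕ) (1 : ℂ) using 2 with k
    split_ifs with h <;> simp [h]
  refine ⟨hd, ?_⟩
  rw [hp.coeff_eq hd]
  refine summable_of_ne_finset_zero (s := {0}) fun k hk => ?_
  simp at hk
  simp [hk]

lemma polynomial (p : Polynomial ℂ) : InWeighted m fun z => p.eval z :=
  (one.polynomial_mul p).congr fun z _ => by simp

lemma finset_sum {ι : Type*} (s : Finset ι) (G : ι → ℂ → ℂ) (hG : ∀ i ∈ s, InWeighted m (G i)) :
    InWeighted m fun z => ∑ i ∈ s, G i z := by
  classical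
  induction s using Finset.induction_on with
  | empty => simpa using one.const_mul (m := m) 0
  | insert i s hi ih =>
    refine ((hG i (by simp)).add (ih fun j hj => hG j (by simp [hj]))).congr fun z _ => ?_
    rw [Finset.sum_insert hi]

end InWeighted

/-- The generalized local Douglas formula, with the local Dirichlet integral of `f` at `l`
replaced by the equivalent coefficient condition on `f⁽ᵐ⁺¹⁾ / (z - l)`. -/
lemma coeff_local_douglas (m : ℕ) {l : ℂ} (hl : ‖l‖ = 1) {f : ℂ → ℂ}
    (hf : DifferentiableOn ℂ f (ball 0 1)) :
    (Summable fun k : ℕ =>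
      ‖coeff (fun z => iteratedDeriv (m + 1) f z / (z - l)) k‖ ^ 2 / ((k : ℝ) + 1) ^ (m + 2)) ↔
    ∃ (α : ℂ) (g : ℂ → ℂ), InWeighted m g ∧ ∀ z ∈ ball (0 : ℂ) 1, f z = α + (z - l) * g z := by
  have hl0 : l ≠ 0 := by rintro rfl; simp at hl
  have hdl : DifferentiableOn ℂ (fun z : ℂ => z - l) (ball 0 1) :=
    differentiableOn_id.sub (differentiableOn_const _)
  have hne : ∀ z ∈ ball (0 : ℂ) 1, z - l ≠ 0 := fun z hz => sub_ne_zero_of_ball hl hz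
  set G := fun z => iteratedDeriv (m + 1) f z / (z - l) with hG
  have hDf := differentiableOn_iteratedDeriv (m + 1) hf
  have hGd : DifferentiableOn ℂ G (ball 0 1) := hDf.div hdl hne
  have hb := (((isPowerSum_coeff hGd).sub_mul l).congr (G := iteratedDeriv (m + 1) f)
    (fun z hz => by simp only [hG]; field_simp [hne z hz])).coeff_eq hDf
  have hb0 : (derivWeight (m + 1) 0 : ℂ) * coeff f (m + 1) = - l * coeff G 0 := by
    have := congrFun hb 0
    rw [coeff_iteratedDeriv] at this
    simpa using this
  have hbs : ∀ k, (derivWeight (m + 1) (k + 1) : ℂ) * coeff f (k + 1 + (m + 1)) =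
      coeff G k - l * coeff G (k + 1) := fun k => by
    have := congrFun hb (k + 1)
    rw [coeff_iteratedDeriv] at this
    simpa using this
  -- The relation between the coefficients of `f` and of `(f - α) / (z - l)`.
  have hrec : ∀ (α : ℂ) (g : ℂ → ℂ), DifferentiableOn ℂ g (ball 0 1) →
      (∀ z ∈ ball (0 : ℂ) 1, f z = α + (z - l) * g z) →
      coeff f 0 = α - l * coeff g 0 ∧
      ∀ k, coeff f (k + 1) = coeff g k - l * coeff g (k + 1) := fun α g hg h => by
    have hp : IsPowerSum f (fun k => (if k = 0 then α else 0) +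
        ((if k = 0 then 0 else coeff g (k - 1)) - l * coeff g k)) := fun z hz => by
      have h1 := hasSum_ite_eq (0 : ℕ) α
      rw [h z hz]
      convert h1.add ((isPowerSum_coeff hg).sub_mul l z hz) using 2 with k
      split_ifs with hk <;> simp [hk]
    have := hp.coeff_eq hf
    refine ⟨?_, fun k => ?_⟩
    · rw [this]; simp [sub_eq_add_neg]
    · rw [this]; simp
  constructor
  · intro hS
    obtain ⟨e, he, hes⟩ := exists_coeff_of_coeff_quot m l hl (coeff f) (coeff G) hS hbs
    -- This `α` makes the coefficient of index `m + 1` of `(f - α) / (z - l)` equal to `e 0`.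
    set α : ℂ := l ^ (m + 2) * e 0 + ∑ j ∈ Finset.range (m + 2), coeff f j * l ^ j with hα
    set g : ℂ → ℂ := fun z => (f z - α) / (z - l) with hg
    have hgd : DifferentiableOn ℂ g (ball 0 1) :=
      (hf.sub (differentiableOn_const _)).div hdl hne
    have hfg : ∀ z ∈ ball (0 : ℂ) 1, f z = α + (z - l) * g z := fun z hz => by
      simp only [hg]; field_simp [hne z hz]; ring
    obtain ⟨r0, rs⟩ := hrec α g hgd hfg
    have hsum : ∀ k, l ^ (k + 1) * coeff g k =
        α - ∑ j ∈ Finset.range (k + 1), coeff f j * l ^ j := fun k => by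
      induction k with
      | zero => simp [r0]
      | succ k ih =>
        rw [Finset.sum_range_succ, rs k]
        linear_combination ih
    have hge : ∀ k, coeff g (k + (m + 1)) = e k := fun k => by
      induction k with
      | zero =>
        have := hsum (m + 1)
        rw [hα] at this
        have h2 : l ^ (m + 2) ≠ 0 := pow_ne_zero _ hl0
        rw [zero_add]
        refine mul_left_cancel₀ h2 ?_
        linear_combination this
      | succ k ih =>
        have h1 := he k
        have h2 := rs (k + (m + 1))
        rw [show k + (m + 1) + 1 = k + 1 + (m + 1) by ring] at h2
        refine mul_left_cancel₀ hl0 ?_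
        rw [ih] at h2
        linear_combination h2 + h1
    refine ⟨α, g, ⟨hgd, ?_⟩, hfg⟩
    rw [summable_shift m (m + 1) (fun k => ‖coeff g k‖ ^ 2) (fun _ => sq_nonneg _)]
    simpa only [hge] using hes
  · rintro ⟨α, g, hg, hfg⟩
    obtain ⟨-, rs⟩ := hrec α g hg.1 hfg
    refine coeff_quot_of_coeff m l hl (coeff g) (coeff G) hg.2 ?_ fun k => ?_
    · rw [← rs]; exact hb0
    · rw [← hbs, show k + 1 + m = k + (m + 1) by ring, show k + 1 + (m + 1) = k + (m + 1) + 1 by ring, ← rs]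

/-! ### Weighted area integrals in terms of coefficients -/

lemma integral_exp_int (j k : ℕ) :
    ∫ θ in (-Real.pi)..Real.pi, cexp (j * θ * I) * cexp (-(k * θ * I)) =
      if j = k then 2 * (Real.pi : ℂ) else 0 := by
  have e : ∀ θ : ℝ, cexp (j * θ * I) * cexp (-(k * θ * I)) =
      cexp ((((j : ℤ) - k : ℤ) : ℂ) * I * θ) := fun θ => by
    rw [← Complex.exp_add]; congr 1; push_cast; ring
  simp only [e]
  split_ifs with h
  · subst h; simp; ring
  · have hne : (((j : ℤ) - k : ℤ) : ℂ) ≠ 0 := by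
      rw [Int.cast_ne_zero, sub_ne_zero]; exact_mod_cast h
    rw [integral_exp_mul_complex (mul_ne_zero hne I_ne_zero), div_eq_zero_iff, sub_eq_zero]
    left
    rw [Complex.exp_eq_exp_iff_exists_int]
    exact ⟨(j : ℤ) - k, by push_cast; ring⟩

/-- Termwise integration of an absolutely convergent Fourier series against a bounded function. -/
lemma hasSum_integral_mul {u : ℕ → ℂ} (hu : Summable fun k => ‖u k‖) {F φ : ℝ → ℂ}
    (hφ : Continuous φ) (B : ℝ) (hB : ∀ θ, ‖φ θ‖ ≤ B)
    (hF : ∀ θ : ℝ, HasSum (fun k : ℕ => u k * cexp (k * θ * I)) (F θ)) :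
    HasSum (fun k : ℕ => u k * ∫ θ in (-Real.pi)..Real.pi, cexp (k * θ * I) * φ θ)
      (∫ θ in (-Real.pi)..Real.pi, F θ * φ θ) := by
  have := intervalIntegral.hasSum_integral_of_dominated_convergence (μ := volume)
    (a := -Real.pi) (b := Real.pi) (F := fun (k : ℕ) (θ : ℝ) => u k * cexp (k * θ * I) * φ θ)
    (f := fun θ => F θ * φ θ) (fun k _ => ‖u k‖ * B) ?_ ?_ ?_ ?_ ?_
  · simpa only [mul_assoc, intervalIntegral.integral_const_mul] using this
  · intro k
    exact Continuous.aestronglyMeasurable (by fun_prop)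
  · refine fun k => Filter.Eventually.of_forall fun θ _ => ?_
    have h1 : ‖cexp (k * θ * I)‖ = 1 := by
      rw [← Complex.norm_exp_ofReal_mul_I (k * θ)]; push_cast; rfl
    rw [norm_mul, norm_mul, h1, mul_one]
    gcongr
    exact hB θ
  · exact Filter.Eventually.of_forall fun θ _ => hu.mul_right B
  · exact intervalIntegrable_const
  · exact Filter.Eventually.of_forall fun θ _ => (hF θ).mul_right _

/-- Parseval's identity for an absolutely convergent Fourier series. -/
lemma hasSum_parseval {u : ℕ → ℂ} (hu : Summable fun k => ‖u k‖) {F : ℝ → ℂ} (hFc : Continuous F)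
    (hF : ∀ θ : ℝ, HasSum (fun k : ℕ => u k * cexp (k * θ * I)) (F θ)) :
    HasSum (fun k => 2 * Real.pi * ‖u k‖ ^ 2) (∫ θ in (-Real.pi)..Real.pi, ‖F θ‖ ^ 2) := by
  have hn : ∀ (k : ℕ) (θ : ℝ), ‖cexp (k * θ * I)‖ = 1 := fun k θ => by
    rw [← Complex.norm_exp_ofReal_mul_I (k * θ)]; push_cast; rfl
  have hFB : ∀ θ, ‖F θ‖ ≤ ∑' k, ‖u k‖ := fun θ => by
    rw [← (hF θ).tsum_eq]
    refine tsum_of_norm_bounded hu.hasSum fun k => ?_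
    rw [norm_mul, hn, mul_one]
  have hc : ∀ (k : ℕ) (θ : ℝ), (starRingEnd ℂ) (cexp (k * θ * I)) = cexp (-(k * θ * I)) :=
    fun k θ => by rw [← Complex.exp_conj]; simp
  have h1 : ∀ k : ℕ, ∫ θ in (-Real.pi)..Real.pi, F θ * cexp (-(k * θ * I)) =
      2 * Real.pi * u k := fun k => by
    have h2 := hasSum_integral_mul hu (φ := fun θ : ℝ => cexp (-(k * θ * I))) (by fun_prop) 1
      (fun θ => by rw [← hc, RCLike.norm_conj, hn]) hF
    simp only [integral_exp_int] at h2
    refine h2.unique ?_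
    convert hasSum_ite_eq k (2 * Real.pi * u k) using 2 with j
    split_ifs with h
    · rw [h]; ring
    · simp
  have h3 : ∀ k : ℕ, ∫ θ in (-Real.pi)..Real.pi, cexp (k * θ * I) * (starRingEnd ℂ) (F θ) =
      2 * Real.pi * (starRingEnd ℂ) (u k) := fun k => by
    have h4 := congrArg (starRingEnd ℂ) (h1 k)
    rw [intervalIntegral.integral_of_le (by linarith [Real.pi_pos]), ← integral_conj,
      ← intervalIntegral.integral_of_le (by linarith [Real.pi_pos])] at h4
    simp only [map_mul, ← hc, Complex.conj_conj, Complex.conj_ofReal, map_ofNat] at h4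
    rw [← h4]
    simp only [mul_comm]
  have h5 := hasSum_integral_mul hu (φ := fun θ => (starRingEnd ℂ) (F θ))
    (Complex.continuous_conj.comp hFc) _ (fun θ => by rw [RCLike.norm_conj]; exact hFB θ) hF
  simp only [h3, Complex.mul_conj, Complex.normSq_eq_norm_sq] at h5
  rw [intervalIntegral.integral_ofReal] at h5
  rw [← Complex.hasSum_ofReal]
  refine (hasSum_iff_of_eq fun k => ?_).1 h5
  rw [mul_left_comm, Complex.mul_conj, Complex.normSq_eq_norm_sq]
  push_cast
  ring

lemma lintegral_beta (n k : ℕ) :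
    ∫⁻ r in Set.Ioo (0 : ℝ) 1, ENNReal.ofReal (2 * r ^ (2 * k + 1) * (1 - r ^ 2) ^ n) =
      ENNReal.ofReal (n.factorial / derivWeight (n + 1) k) := by
  have h1 := Complex.betaIntegral_eval_nat_add_one_right (u := (k : ℂ) + 1)
    (by simp; positivity) n
  have h2 : ∏ j ∈ Finset.range (n + 1), ((k : ℂ) + 1 + j) = (derivWeight (n + 1) k : ℂ) := by
    rw [derivWeight_eq, Nat.ascFactorial_eq_prod_range]; push_cast; rfl
  have h3 : ∫ t in (0 : ℝ)..1, t ^ k * (1 - t) ^ n = n.factorial / derivWeight (n + 1) k := by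
    rw [h2, Complex.betaIntegral] at h1
    simp only [add_sub_cancel_right, Complex.cpow_natCast] at h1
    apply Complex.ofReal_injective
    rw [← intervalIntegral.integral_ofReal]
    push_cast
    exact h1
  have h4 := intervalIntegral.integral_comp_mul_deriv (a := 0) (b := 1) (f := fun r : ℝ => r ^ 2)
    (f' := fun r => 2 * r) (g := fun t => t ^ k * (1 - t) ^ n)
    (fun r _ => by simpa using hasDerivAt_pow 2 r) (by fun_prop) (by fun_prop)
  norm_num at h4
  rw [h3] at h4
  rw [← h4, intervalIntegral.integral_of_le zero_le_one, integral_Ioc_eq_integral_Ioo,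
    ofReal_integral_eq_lintegral_ofReal]
  · refine setLIntegral_congr_fun measurableSet_Ioo fun r _ => ?_
    congr 1
    ring
  · exact (Continuous.integrableOn_Icc (by fun_prop)).mono_set Set.Ioo_subset_Icc_self
  · refine (ae_restrict_iff' measurableSet_Ioo).2 (Filter.Eventually.of_forall fun r hr => ?_)
    have : 0 ≤ 1 - r ^ 2 := by nlinarith [hr.1, hr.2]
    have := hr.1.le
    simp only [Pi.zero_apply]
    positivity

lemma lintegral_circle {G : ℂ → ℂ} (hG : DifferentiableOn ℂ G (ball 0 1)) {r : ℝ}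
    (hr : r ∈ Set.Ioo (0 : ℝ) 1) :
    ∫⁻ θ in Set.Ioo (-Real.pi) Real.pi, (‖G (r * cexp (θ * I))‖₊ : ℝ≥0∞) ^ 2 =
      ∑' k, ENNReal.ofReal (2 * Real.pi * (‖coeff G k‖ * r ^ k) ^ 2) := by
  have hmem : ∀ θ : ℝ, (r : ℂ) * cexp (θ * I) ∈ ball (0 : ℂ) 1 := fun θ => by
    simp [Complex.norm_exp_ofReal_mul_I, abs_of_pos hr.1, hr.2]
  have hcont : Continuous fun θ : ℝ => G (r * cexp (θ * I)) :=
    hG.continuousOn.comp_continuous (by fun_prop) hmem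
  have hu : Summable fun k => ‖coeff G k * (r : ℂ) ^ k‖ :=
    (isPowerSum_coeff hG r (by simp [abs_of_pos hr.1, hr.2])).summable.norm
  have hp := hasSum_parseval hu hcont fun θ => by
    refine (hasSum_iff_of_eq fun k => ?_).1 (isPowerSum_coeff hG _ (hmem θ))
    rw [mul_pow, ← Complex.exp_nat_mul]
    ring_nf
  have e : ∀ k, ‖coeff G k * (r : ℂ) ^ k‖ = ‖coeff G k‖ * r ^ k := fun k => by
    rw [norm_mul, norm_pow, Complex.norm_real, Real.norm_of_nonneg hr.1.le]
  simp only [e] at hp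
  rw [← ENNReal.ofReal_tsum_of_nonneg (fun k => by positivity) hp.summable, hp.tsum_eq,
    intervalIntegral.integral_of_le (by linarith [Real.pi_pos]), integral_Ioc_eq_integral_Ioo,
    ofReal_integral_eq_lintegral_ofReal]
  · refine lintegral_congr fun θ => ?_
    rw [ENNReal.ofReal_pow (norm_nonneg _), ofReal_norm]
    rfl
  · exact (Continuous.integrableOn_Icc (hcont.norm.pow 2)).mono_set Set.Ioo_subset_Icc_self
  · exact Filter.Eventually.of_forall fun θ => sq_nonneg _

/-- The norm of a weighted Bergman space in terms of Taylor coefficients. -/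
lemma lintegral_bergman (n : ℕ) {G : ℂ → ℂ} (hG : DifferentiableOn ℂ G (ball 0 1)) :
    ∫⁻ z in ball (0 : ℂ) 1, (‖G z‖₊ : ℝ≥0∞) ^ 2 * ENNReal.ofReal ((1 - ‖z‖ ^ 2) ^ n) =
      ∑' k, ENNReal.ofReal (Real.pi * n.factorial * (‖coeff G k‖ ^ 2 / derivWeight (n + 1) k)) := by
  classical
  set Φ : ℂ → ℝ≥0∞ := (ball (0 : ℂ) 1).indicator
    fun z => (‖G z‖₊ : ℝ≥0∞) ^ 2 * ENNReal.ofReal ((1 - ‖z‖ ^ 2) ^ n) with hΦ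
  have hΦm : Measurable Φ := by
    have h1 : Measurable ((ball (0 : ℂ) 1).indicator G) := by
      rw [← Set.piecewise_eq_indicator]
      exact hG.continuousOn.measurable_piecewise continuousOn_const measurableSet_ball
    have h2 : Φ = fun z => (‖(ball (0 : ℂ) 1).indicator G z‖₊ : ℝ≥0∞) ^ 2 *
        ENNReal.ofReal ((1 - ‖z‖ ^ 2) ^ n) := by
      funext z
      by_cases hz : z ∈ ball (0 : ℂ) 1
      · simp only [hΦ, Set.indicator_of_mem hz]
      · simp only [hΦ, Set.indicator_of_notMem hz]; simp
    rw [h2]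
    fun_prop
  rw [← lintegral_indicator measurableSet_ball, ← Complex.lintegral_comp_polarCoord_symm,
    polarCoord_target, Measure.volume_eq_prod, ← Measure.prod_restrict,
    lintegral_prod _ (by
      simp only [smul_eq_mul]
      have hm : Measurable fun p : ℝ × ℝ => Complex.polarCoord.symm p := by
        simp only [Complex.polarCoord_symm_apply]
        fun_prop
      exact ((ENNReal.measurable_ofReal.comp measurable_fst).mul (hΦm.comp hm)).aemeasurable)]
  have hin : ∀ r ∈ Set.Ioi (0 : ℝ), ∫⁻ θ in Set.Ioo (-Real.pi) Real.pi,
      ENNReal.ofReal (r, θ).1 • Φ (Complex.polarCoord.symm (r, θ)) =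
      (Set.Ioo (0 : ℝ) 1).indicator (fun r => ∑' k, ENNReal.ofReal (Real.pi * ‖coeff G k‖ ^ 2) *
        ENNReal.ofReal (2 * r ^ (2 * k + 1) * (1 - r ^ 2) ^ n)) r := by
    intro r hr
    have hr0 : 0 < r := hr
    have hpol : ∀ θ : ℝ, Complex.polarCoord.symm (r, θ) = r * cexp (θ * I) := fun θ => by
      rw [Complex.polarCoord_symm_apply, Complex.exp_mul_I]; simp
    have hnorm : ∀ θ : ℝ, ‖(r : ℂ) * cexp (θ * I)‖ = r := fun θ => by
      simp [Complex.norm_exp_ofReal_mul_I, abs_of_pos hr0]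
    by_cases h1 : r < 1
    · rw [Set.indicator_of_mem (show r ∈ Set.Ioo (0 : ℝ) 1 from ⟨hr0, h1⟩)]
      have h2 : 0 ≤ 1 - r ^ 2 := by nlinarith
      have hΦv : ∀ θ : ℝ, ENNReal.ofReal (r, θ).1 • Φ (Complex.polarCoord.symm (r, θ)) =
          ENNReal.ofReal (r * (1 - r ^ 2) ^ n) * (‖G (r * cexp (θ * I))‖₊ : ℝ≥0∞) ^ 2 := fun θ => by
        rw [hpol, hΦ, Set.indicator_of_mem (by rw [mem_ball_zero_iff, hnorm]; exact h1), hnorm, smul_eq_mul,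
          ENNReal.ofReal_mul hr0.le]
        ring
      simp only [hΦv]
      rw [lintegral_const_mul' _ _ ENNReal.ofReal_ne_top, lintegral_circle hG ⟨hr0, h1⟩,
        ← ENNReal.tsum_mul_left]
      refine tsum_congr fun k => ?_
      rw [← ENNReal.ofReal_mul (by positivity), ← ENNReal.ofReal_mul (by positivity)]
      congr 1
      ring
    · rw [Set.indicator_of_notMem (by simp [h1])]
      refine (lintegral_congr fun θ => ?_).trans lintegral_zero
      rw [hpol, hΦ, Set.indicator_of_notMem (by rw [mem_ball_zero_iff, hnorm]; exact h1), smul_zero]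
  rw [setLIntegral_congr_fun measurableSet_Ioi hin, lintegral_indicator measurableSet_Ioo,
    Measure.restrict_restrict measurableSet_Ioo,
    Set.inter_eq_left.2 (fun r hr => hr.1), lintegral_tsum (fun k => by
      exact (Measurable.ennreal_ofReal (by fun_prop)).const_mul _ |>.aemeasurable)]
  refine tsum_congr fun k => ?_
  rw [lintegral_const_mul' _ _ ENNReal.ofReal_ne_top, lintegral_beta,
    ← ENNReal.ofReal_mul (by positivity)]
  congr 1
  ring

lemma lintegral_bergman_lt_top_iff (n : ℕ) {G : ℂ → ℂ} (hG : DifferentiableOn ℂ G (ball 0 1)) :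
    ∫⁻ z in ball (0 : ℂ) 1, (‖G z‖₊ : ℝ≥0∞) ^ 2 * ENNReal.ofReal ((1 - ‖z‖ ^ 2) ^ n) < ⊤ ↔
      Summable fun k : ℕ => ‖coeff G k‖ ^ 2 / ((k : ℝ) + 1) ^ (n + 1) := by
  have hp := derivWeight_pos (n + 1)
  have hnn : ∀ k, 0 ≤ Real.pi * n.factorial * (‖coeff G k‖ ^ 2 / derivWeight (n + 1) k) := fun k => by
    have := hp k; positivity
  have h1 : (∑' k, ENNReal.ofReal
      (Real.pi * n.factorial * (‖coeff G k‖ ^ 2 / derivWeight (n + 1) k))) < ⊤ ↔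
      Summable fun k => Real.pi * n.factorial * (‖coeff G k‖ ^ 2 / derivWeight (n + 1) k) := by
    rw [lt_top_iff_ne_top]
    simp only [ENNReal.ofReal]
    rw [ENNReal.tsum_coe_ne_top_iff_summable, ← NNReal.summable_coe]
    simp only [Real.coe_toNNReal _ (hnn _)]
  rw [lintegral_bergman n hG, h1, summable_mul_left_iff (by positivity)]
  constructor <;> intro h
  · refine Summable.of_nonneg_of_le (fun k => by positivity) (fun k => ?_)
      (h.mul_left ((((n + 1 : ℕ) : ℝ) + 1) ^ (n + 1)))
    have h2 := derivWeight_le (n + 1) k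
    rw [← mul_div_assoc, div_le_div_iff₀ (by positivity) (hp k)]
    nlinarith [sq_nonneg ‖coeff G k‖]
  · refine Summable.of_nonneg_of_le (fun k => by have := hp k; positivity) (fun k => ?_) h
    have h2 := derivWeight_ge (n + 1) k
    gcongr

/-! ### From one point to finitely many -/

lemma const_mul_lt_top_iff {c x : ℝ≥0∞} (h0 : c ≠ 0) (ht : c ≠ ⊤) : c * x < ⊤ ↔ x < ⊤ := by
  rw [ENNReal.mul_lt_top_iff]
  constructor
  · rintro (h | h | h)
    · exact h.2
    · exact absurd h h0
    · simp [h]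
  · exact fun h => Or.inl ⟨ht.lt_top, h⟩

/-- For a finitely supported `μ` the Poisson kernel splits the Dirichlet-type integral into local
ones, each a weighted Bergman norm of `f⁽ᵐ⁺¹⁾ / (z - λ_j)`. -/
lemma Dmu_lt_top_iff (m k : ℕ) (lam : Fin k → ℂ)
    (c : Fin k → ℝ) (hc : ∀ j, 0 < c j) (f : ℂ → ℂ) :
    Dmu (m + 1) (∑ j, ENNReal.ofReal (c j) • Measure.dirac (lam j)) f < ⊤ ↔
      ∀ j, ∫⁻ z in ball (0 : ℂ) 1, (‖iteratedDeriv (m + 1) f z / (z - lam j)‖₊ : ℝ≥0∞) ^ 2 *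
        ENNReal.ofReal ((1 - ‖z‖ ^ 2) ^ (m + 1)) < ⊤ := by
  have hP : ∀ z, Pmu (∑ j, ENNReal.ofReal (c j) • Measure.dirac (lam j)) z =
      ∑ j, ENNReal.ofReal (c j) * ENNReal.ofReal ((1 - ‖z‖ ^ 2) / ‖z - lam j‖ ^ 2) := fun z => by
    simp only [Pmu, lintegral_finsetSum_measure, lintegral_smul_measure, lintegral_dirac,
      smul_eq_mul]
  have hmeas : Measurable (iteratedDeriv (m + 1) f) := by
    rw [iteratedDeriv_succ]; exact measurable_deriv _
  have hsq : ∀ w : ℂ, (‖w‖₊ : ℝ≥0∞) ^ 2 = ENNReal.ofReal (‖w‖ ^ 2) := fun w => by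
    rw [ENNReal.ofReal_pow (norm_nonneg _), ofReal_norm]; rfl
  have hint : ∀ z ∈ ball (0 : ℂ) 1, (‖iteratedDeriv (m + 1) f z‖₊ : ℝ≥0∞) ^ 2 *
      Pmu (∑ j, ENNReal.ofReal (c j) • Measure.dirac (lam j)) z *
        ENNReal.ofReal ((1 - ‖z‖ ^ 2) ^ (m + 1 - 1)) =
      ∑ j, ENNReal.ofReal (c j) * ((‖iteratedDeriv (m + 1) f z / (z - lam j)‖₊ : ℝ≥0∞) ^ 2 *
        ENNReal.ofReal ((1 - ‖z‖ ^ 2) ^ (m + 1))) := fun z hz => by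
    have hz1 : 0 ≤ 1 - ‖z‖ ^ 2 := by
      have := mem_ball_zero_iff.1 hz
      nlinarith [norm_nonneg z]
    rw [hP, Finset.mul_sum, Finset.sum_mul]
    refine Finset.sum_congr rfl fun j _ => ?_
    have hj := (hc j).le
    rw [hsq, hsq, norm_div, add_tsub_cancel_right]
    generalize 1 - ‖z‖ ^ 2 = w at hz1 ⊢
    rw [← ENNReal.ofReal_mul hj, ← ENNReal.ofReal_mul (by positivity),
      ← ENNReal.ofReal_mul (by positivity), ← ENNReal.ofReal_mul (by positivity),
      ← ENNReal.ofReal_mul hj]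
    congr 1
    ring
  rw [Dmu, nA, setLIntegral_congr_fun measurableSet_ball hint, Measure.restrict_smul,
    lintegral_smul_measure, smul_eq_mul, lintegral_finsetSum _ (fun j _ => by fun_prop),
    const_mul_lt_top_iff (by rw [Ne, ENNReal.ofReal_eq_zero, not_le]; positivity)
      ENNReal.ofReal_ne_top,
    const_mul_lt_top_iff (by simp) (by simp [Real.pi_pos]), ENNReal.sum_lt_top]
  simp only [Finset.mem_univ, true_imp_iff]
  refine forall_congr' fun j => ?_
  rw [lintegral_const_mul' _ _ ENNReal.ofReal_ne_top,
    const_mul_lt_top_iff (by simpa using hc j) ENNReal.ofReal_ne_top]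

/-- Representations `f = α_j + (z - λ_j) g_j` exist at all the points `λ_j` exactly when `f` differs
from a polynomial of low degree by a multiple of `∏ (z - λ_j)`: partial fractions in one
direction, the multiplier property of polynomials in the other. -/
lemma forall_local_iff (m k : ℕ) (hk : 0 < k) (lam : Fin k → ℂ)
    (hdist : Function.Injective lam) (f : ℂ → ℂ) :
    (∀ j, ∃ (α : ℂ) (g : ℂ → ℂ), InWeighted m g ∧
        ∀ z ∈ ball (0 : ℂ) 1, f z = α + (z - lam j) * g z) ↔
      ∃ (p : Polynomial ℂ) (g : ℂ → ℂ), p.degree < (k : ℕ) ∧ InWeighted m g ∧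
        ∀ z ∈ ball (0 : ℂ) 1, f z = p.eval z + g z * ∏ j, (z - lam j) := by
  classical
  constructor
  · intro h
    choose α g hg hfg using h
    have hne : (Finset.univ : Finset (Fin k)).Nonempty := ⟨⟨0, hk⟩, Finset.mem_univ _⟩
    set p := Lagrange.interpolate Finset.univ lam α with hp
    have hpj : ∀ j, p.eval (lam j) = α j := fun j =>
      Lagrange.eval_interpolate_at_node _ hdist.injOn (Finset.mem_univ j)
    set q : Fin k → Polynomial ℂ := fun j => p /ₘ (Polynomial.X - Polynomial.C (lam j)) with hq
    have hpq : ∀ j z, p.eval z = α j + (z - lam j) * (q j).eval z := fun j z => by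
      have h1 := Polynomial.modByMonic_add_div p (Polynomial.X - Polynomial.C (lam j))
      rw [Polynomial.modByMonic_X_sub_C_eq_C_eval, hpj] at h1
      conv_lhs => rw [← h1]
      simp [hq]
    -- With `p` interpolating the values `α_j`, the quotient `(f - p) / ∏ (z - λ_i)` is the
    -- combination of the `(f - p) / (z - λ_j) = g_j - q_j` given by partial fractions of
    -- `1 / ∏ (z - λ_i)`.
    set A : Fin k → ℂ := fun j => ∏ i ∈ Finset.univ.erase j, (lam j - lam i)⁻¹ with hA
    have hbasis : ∀ z, ∑ j, A j * ∏ i ∈ Finset.univ.erase j, (z - lam i) = 1 := fun z => by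
      have h1 := congrArg (Polynomial.eval z) (Lagrange.sum_basis hdist.injOn hne)
      simp only [Polynomial.eval_finsetSum, Polynomial.eval_one, Lagrange.basis,
        Polynomial.eval_prod, Lagrange.basisDivisor, Polynomial.eval_mul, Polynomial.eval_C,
        Polynomial.eval_sub, Polynomial.eval_X, Finset.prod_mul_distrib] at h1
      exact h1
    refine ⟨p, fun z => ∑ j, A j * (g j z + (-1) * (q j).eval z), ?_, ?_, fun z hz => ?_⟩
    · have h := Lagrange.degree_interpolate_lt (s := Finset.univ) (v := lam) α hdist.injOn
      simpa [hp] using h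
    · exact InWeighted.finset_sum _ _ fun j _ =>
        ((hg j).add ((InWeighted.polynomial (q j)).const_mul (-1))).const_mul (A j)
    · have h1 : ∀ j, A j * (g j z + (-1) * (q j).eval z) * ∏ i, (z - lam i) =
          (f z - p.eval z) * (A j * ∏ i ∈ Finset.univ.erase j, (z - lam i)) := fun j => by
        rw [← Finset.mul_prod_erase _ _ (Finset.mem_univ j), hfg j z hz, hpq j z]
        ring
      rw [Finset.sum_mul, Finset.sum_congr rfl fun j _ => h1 j, ← Finset.mul_sum, hbasis]
      ring
  · rintro ⟨p, g, -, hg, hfg⟩ j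
    set q := p /ₘ (Polynomial.X - Polynomial.C (lam j)) with hq
    set r : Polynomial ℂ := ∏ i ∈ Finset.univ.erase j, (Polynomial.X - Polynomial.C (lam i)) with hr
    refine ⟨p.eval (lam j), fun z => q.eval z + r.eval z * g z,
      (InWeighted.polynomial q).add (hg.polynomial_mul r), fun z hz => ?_⟩
    have h1 := Polynomial.modByMonic_add_div p (Polynomial.X - Polynomial.C (lam j))
    rw [Polynomial.modByMonic_X_sub_C_eq_C_eval] at h1
    have h2 : p.eval z = p.eval (lam j) + (z - lam j) * q.eval z := by
      conv_lhs => rw [← h1]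
      simp [hq]
    have h3 : r.eval z = ∏ i ∈ Finset.univ.erase j, (z - lam i) := by
      simp [hr, Polynomial.eval_prod]
    show f z = p.eval (lam j) + (z - lam j) * (q.eval z + r.eval z * g z)
    rw [hfg z hz, h2, h3, ← Finset.mul_prod_erase _ _ (Finset.mem_univ j)]
    ring

theorem stmt10 (n k : ℕ) (hn : 1 ≤ n) (hk : 1 ≤ k)
    (lam : Fin k → ℂ) (hlam : ∀ j, lam j ∈ sphere (0:ℂ) 1)
    (hdist : Function.Injective lam)
    (c : Fin k → ℝ) (hc : ∀ j, 0 < c j)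
    (f : ℂ → ℂ) (hf : DifferentiableOn ℂ f (ball (0:ℂ) 1)) :
    Dmu n (∑ j, ENNReal.ofReal (c j) • Measure.dirac (lam j)) f < ⊤ ↔
      ∃ (p : Polynomial ℂ) (g : ℂ → ℂ),
        p.degree < (k : ℕ) ∧ DifferentiableOn ℂ g (ball (0:ℂ) 1) ∧
        Dsig (n-1) g < ⊤ ∧
        ∀ z ∈ ball (0:ℂ) 1, f z = p.eval z + g z * ∏ j, (z - lam j) := by
  obtain ⟨m, rfl⟩ : ∃ m, n = m + 1 := ⟨n - 1, by omega⟩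
  have hl : ∀ j, ‖lam j‖ = 1 := fun j => by simpa using hlam j
  have hG : ∀ j, DifferentiableOn ℂ (fun z => iteratedDeriv (m + 1) f z / (z - lam j))
      (ball (0 : ℂ) 1) := fun j =>
    (differentiableOn_iteratedDeriv (m + 1) hf).div
      (differentiableOn_id.sub (differentiableOn_const _))
      fun z hz => sub_ne_zero_of_ball (hl j) hz
  rw [Dmu_lt_top_iff m k lam c hc f]
  have h1 := fun j => (lintegral_bergman_lt_top_iff (m + 1) (hG j)).trans
    (coeff_local_douglas m (hl j) hf)
  rw [forall_congr' h1, forall_local_iff m k hk lam hdist f]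
  simp only [Nat.add_sub_cancel, Dsig_lt_top_iff, InWeighted, and_assoc]
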